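/- arXiv:2403.13700 — 2 statements merged into one kernel-verified Lean document; each statement's English description precedes it below -/
import Mathlib

section
/- Let M : ℕ, let p > 0 be a real number, and let i : Fin (M+1). Let g : (Fin (M+1) → ℝ) → ℝ be the composition of stl_and_lt0 with the map sending a vector to the list of its coordinates. Then the function h ↦ h⁻¹ * (g ((fun _ => p) + h • Pi.single i 1) - g (fun _ => p)) tends to 1/(M+1) as h tends to 0 from the right (along the filter 𝓝[>] 0). -/
open Filter Topology Real

/-- Minimum of a list of reals (`0` for the empty list). -/
noncomputable def listMin (a : List ℝ) : ℝ := a.min?.getD 0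

/-- Maximum of a list of reals (`0` for the empty list). -/
noncomputable def listMax (a : List ℝ) : ℝ := a.max?.getD 0

/-- STL conjunction, case `a_min < 0`. -/
noncomputable def stl_and_lt0 (ν : ℝ) (a : List ℝ) : ℝ :=
  (a.map fun x => listMin a * exp ((x - listMin a) / listMin a)
      * exp (ν * ((x - listMin a) / listMin a))).sum /
  (a.map fun x => exp (ν * ((x - listMin a) / listMin a))).sum

/-- STL conjunction, case `a_min > 0`. -/
noncomputable def stl_and_gt0 (ν : ℝ) (a : List ℝ) : ℝ :=
  (a.map fun x => x * exp (-(ν * ((x - listMin a) / listMin a)))).sum /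
  (a.map fun x => exp (-(ν * ((x - listMin a) / listMin a)))).sum

/-- The STL conjunction `and_S`. -/
noncomputable def and_S (ν : ℝ) (a : List ℝ) : ℝ :=
  if listMin a < 0 then stl_and_lt0 ν a
  else if 0 < listMin a then stl_and_gt0 ν a
  else 0

/-- The STL disjunction `or_S`. -/
noncomputable def or_S (ν : ℝ) (a : List ℝ) : ℝ :=
  if 0 < listMax a then
    (a.map fun x => listMax a * exp ((x - listMax a) / listMax a)
        * exp (ν * ((x - listMax a) / listMax a))).sum /
    (a.map fun x => exp (ν * ((x - listMax a) / listMax a))).sum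
  else if listMax a < 0 then
    (a.map fun x => x * exp (-(ν * ((x - listMax a) / listMax a)))).sum /
    (a.map fun x => exp (-(ν * ((x - listMax a) / listMax a)))).sum
  else 0

/-!
With the minimum replaced by an independent parameter `m`, `stl_and_lt0` is a weighted mean of the
values `m * exp ((x - m) / m)`. At `m = x = p` such a value equals `p` and has gradient `(0, 1)` in
`(m, x)`, so to first order it does not see `m`: substituting for `m` the minimum, which is only
Lipschitz, still gives a differentiable function. As all the values agree at the constant vector
`p`, the variation of the weights does not contribute there either, and since these weights are all
`1`, the derivative of `stl_and_lt0` at a constant vector is the arithmetic mean.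
-/

section Calculus

variable {𝕜 E F G ι : Type*} [NontriviallyNormedField 𝕜] [NormedAddCommGroup E] [NormedSpace 𝕜 E]
  [NormedAddCommGroup F] [NormedSpace 𝕜 F] [NormedAddCommGroup G] [NormedSpace 𝕜 G] {x : E}

/-- Chain rule in which the inner function only has to be differentiable modulo the kernel of the
derivative of the outer one. -/
theorem hasFDerivAt_comp_of_isBigO {g : F → G} {g' : F →L[𝕜] G} {f : E → F} {f' : E →L[𝕜] G}
    (hg : HasFDerivAt g g' (f x)) (hf : (f · - f x) =O[𝓝 x] (· - x))
    (hgf : HasFDerivAt (fun y => g' (f y)) f' x) : HasFDerivAt (fun y => g (f y)) f' x := by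
  have hcont : Tendsto f (𝓝 x) (𝓝 (f x)) :=
    tendsto_sub_nhds_zero_iff.1 <| hf.trans_tendsto <| tendsto_sub_nhds_zero_iff.2 tendsto_id
  refine .of_isLittleO <|
    (((hg.isLittleO.comp_tendsto hcont).trans_isBigO hf).add hgf.isLittleO).congr_left fun y => ?_
  simp only [Function.comp_apply, map_sub]
  abel

theorem hasFDerivAt_smul_of_eq_zero {w : E → 𝕜} {f : E → F} {f' : E →L[𝕜] F}
    (hw : ContinuousAt w x) (hf : HasFDerivAt f f' x) (hfx : f x = 0) :
    HasFDerivAt (fun y => w y • f y) (w x • f') x := by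
  have hwf : (fun y => (w y - w x) • f y) =o[𝓝 x] (· - x) := by
    have hw₀ : (fun y => w y - w x) =o[𝓝 x] (fun _ => (1 : 𝕜)) :=
      (Asymptotics.isLittleO_one_iff 𝕜).2 (tendsto_sub_nhds_zero_iff.2 hw)
    simpa [hfx] using hw₀.smul_isBigO hf.isBigO_sub
  refine .of_isLittleO <| (hwf.add (hf.const_smul (w x)).isLittleO).congr_left fun y => ?_
  simp only [Pi.smul_apply, hfx, smul_zero, sub_smul]
  abel

theorem hasFDerivAt_centerMass_of_forall_eq {s : Finset ι} {w : ι → E → 𝕜} {z : ι → E → F}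
    {z' : ι → E →L[𝕜] F} {c : F} (hw : ∀ j ∈ s, ContinuousAt (w j) x)
    (hz : ∀ j ∈ s, HasFDerivAt (z j) (z' j) x) (hzx : ∀ j ∈ s, z j x = c)
    (hsum : ∑ j ∈ s, w j x ≠ 0) :
    HasFDerivAt (fun y => s.centerMass (w · y) (z · y)) (s.centerMass (w · x) z') x := by
  have hsum_cont : ContinuousAt (fun y => ∑ j ∈ s, w j y) x := tendsto_finsetSum s hw
  have hdev : HasFDerivAt (fun y => ∑ j ∈ s, w j y • (z j y - c)) (∑ j ∈ s, w j x • z' j) x :=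
    .fun_sum fun j hj => hasFDerivAt_smul_of_eq_zero (hw j hj) ((hz j hj).sub_const c)
      (sub_eq_zero.2 (hzx j hj))
  have hdev_zero : ∑ j ∈ s, w j x • (z j x - c) = 0 :=
    Finset.sum_eq_zero fun j hj => by rw [hzx j hj, sub_self, smul_zero]
  refine ((hasFDerivAt_smul_of_eq_zero (hsum_cont.inv₀ hsum) hdev hdev_zero).add_const
    c).congr_of_eventuallyEq ?_
  filter_upwards [hsum_cont.eventually_ne hsum] with y hy
  simp only [Finset.centerMass, Pi.inv_apply, smul_sub, Finset.sum_sub_distrib, ← Finset.sum_smul,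
    inv_smul_smul₀ hy, sub_add_cancel]

end Calculus

theorem hasFDerivAt_mul_exp_sub_div {p : ℝ} (hp : p ≠ 0) :
    HasFDerivAt (fun q : ℝ × ℝ => q.1 * exp ((q.2 - q.1) / q.1)) (.snd ℝ ℝ ℝ) (p, p) := by
  have hfst : HasFDerivAt (fun q : ℝ × ℝ => q.1) (.fst ℝ ℝ ℝ) (p, p) := hasFDerivAt_fst
  have hsnd : HasFDerivAt (fun q : ℝ × ℝ => q.2) (.snd ℝ ℝ ℝ) (p, p) := hasFDerivAt_snd
  have hdev : HasFDerivAt (fun q : ℝ × ℝ => (q.2 - q.1) / q.1)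
      (p⁻¹ • (.snd ℝ ℝ ℝ - .fst ℝ ℝ ℝ)) (p, p) := by
    simp only [div_eq_inv_mul]
    exact hasFDerivAt_smul_of_eq_zero (hfst.continuousAt.inv₀ hp) (hsnd.sub hfst) (sub_self p)
  refine (hfst.mul hdev.exp).congr_fderiv ?_
  ext <;> simp [hp]

theorem listMin_mem {a : List ℝ} (ha : a ≠ []) : listMin a ∈ a := by
  obtain ⟨m, hm⟩ := Option.isSome_iff_exists.1 (List.isSome_min?_of_ne_nil ha)
  simpa [listMin, hm] using List.min?_mem hm

@[simp]
theorem listMin_replicate {n : ℕ} [NeZero n] (p : ℝ) : listMin (List.replicate n p) = p :=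
  List.eq_of_mem_replicate (listMin_mem (by simp [NeZero.ne n]))

section Vector

variable {n : ℕ}

theorem stl_and_lt0_ofFn (ν : ℝ) (v : Fin n → ℝ) :
    stl_and_lt0 ν (List.ofFn v) =
      Finset.univ.centerMass
        (fun j => exp (ν * ((v j - listMin (List.ofFn v)) / listMin (List.ofFn v))))
        (fun j => listMin (List.ofFn v) *
          exp ((v j - listMin (List.ofFn v)) / listMin (List.ofFn v))) := by
  simp only [stl_and_lt0, Finset.centerMass, List.map_ofFn, List.sum_ofFn, Function.comp_apply,
    smul_eq_mul, div_eq_inv_mul, mul_comm (exp (ν * _))]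

variable [NeZero n]

theorem exists_listMin_ofFn_eq (v : Fin n → ℝ) : ∃ j, listMin (List.ofFn v) = v j := by
  have hv : List.ofFn v ≠ [] := by simpa using NeZero.ne n
  obtain ⟨j, hj⟩ := List.mem_ofFn.1 (listMin_mem hv)
  exact ⟨j, hj.symm⟩

theorem abs_listMin_ofFn_sub_le (v : Fin n → ℝ) (p : ℝ) :
    |listMin (List.ofFn v) - p| ≤ ‖v - fun _ => p‖ := by
  obtain ⟨j, hj⟩ := exists_listMin_ofFn_eq v
  rw [hj]
  exact norm_le_pi_norm (v - fun _ => p) j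

theorem continuousAt_listMin_ofFn_const (p : ℝ) :
    ContinuousAt (fun v : Fin n → ℝ => listMin (List.ofFn v)) fun _ => p := by
  rw [ContinuousAt, List.ofFn_const, listMin_replicate, tendsto_iff_norm_sub_tendsto_zero]
  exact squeeze_zero (fun _ => norm_nonneg _) (abs_listMin_ofFn_sub_le · p)
    (tendsto_iff_norm_sub_tendsto_zero.1 tendsto_id)

theorem hasFDerivAt_listMin_mul_exp {p : ℝ} (hp : p ≠ 0) (j : Fin n) :
    HasFDerivAt
      (fun v : Fin n → ℝ => listMin (List.ofFn v) *
        exp ((v j - listMin (List.ofFn v)) / listMin (List.ofFn v)))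
      (ContinuousLinearMap.proj j : (Fin n → ℝ) →L[ℝ] ℝ) (fun _ => p) := by
  refine hasFDerivAt_comp_of_isBigO
    (g := fun q : ℝ × ℝ => q.1 * exp ((q.2 - q.1) / q.1))
    (f := fun v : Fin n → ℝ => (listMin (List.ofFn v), v j))
    (by simpa using hasFDerivAt_mul_exp_sub_div hp) ?_ (hasFDerivAt_apply j _)
  refine Asymptotics.isBigO_of_le _ fun v => max_le ?_ (norm_le_pi_norm (v - fun _ => p) j)
  simpa using! abs_listMin_ofFn_sub_le v p

theorem shadowlifting_stl_and_lt0_cvg_at_right_general (ν : ℝ) {p : ℝ} (hp : p ≠ 0) :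
    HasFDerivAt (fun v : Fin n → ℝ => stl_and_lt0 ν (List.ofFn v))
      ((n : ℝ)⁻¹ • ∑ j, (ContinuousLinearMap.proj j : (Fin n → ℝ) →L[ℝ] ℝ)) (fun _ => p) := by
  have hmin := continuousAt_listMin_ofFn_const (n := n) p
  have hmin_ne : listMin (List.ofFn fun _ : Fin n => p) ≠ 0 := by simpa
  have hweight (j : Fin n) : ContinuousAt (fun v : Fin n → ℝ =>
      exp (ν * ((v j - listMin (List.ofFn v)) / listMin (List.ofFn v)))) (fun _ => p) :=
    ((((continuous_apply j).continuousAt.sub hmin).div hmin hmin_ne).const_mul ν).rexp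
  have hmean := hasFDerivAt_centerMass_of_forall_eq (s := Finset.univ) (c := p)
    (fun j _ => hweight j) (fun j _ => hasFDerivAt_listMin_mul_exp hp j) (by simp)
    (by simp [NeZero.ne n])
  simpa [stl_and_lt0_ofFn, Finset.centerMass] using hmean

end Vector

theorem shadowlifting_stl_and_lt0_cvg_at_right (ν : ℝ) (hν : 0 < ν) (M : ℕ)
    (p : ℝ) (hp : 0 < p) (i : Fin (M + 1)) :
    Filter.Tendsto
      (fun h : ℝ =>
        h⁻¹ * ((stl_and_lt0 ν ∘ fun v : Fin (M + 1) → ℝ => List.ofFn v)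
                 ((fun _ => p) + h • (Pi.single i 1 : Fin (M + 1) → ℝ)) -
               (stl_and_lt0 ν ∘ fun v : Fin (M + 1) → ℝ => List.ofFn v) (fun _ => p)))
      (𝓝[>] (0 : ℝ)) (𝓝 (1 / (M + 1))) := by
  simpa using! ((shadowlifting_stl_and_lt0_cvg_at_right_general ν hp.ne').hasLineDerivAt
    (Pi.single i 1)).tendsto_slope_zero_right
end

section
/- Let M : ℕ and let g : (Fin (M+1) → ℝ) → ℝ be the composition of stl_and_gt0 with the map sending a vector to the list of its coordinates. Then for every real p > 0 and every index i : Fin (M+1), the i-th partial derivative of g at the constant vector with value p exists and equals 1/(M+1). -/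
open Filter Topology Real

/-- The `i`-th partial derivative of `f` at `a` exists and equals `L`. -/
def HasPartialDeriv {n : ℕ} (f : (Fin n → ℝ) → ℝ) (a : Fin n → ℝ) (i : Fin n) (L : ℝ) : Prop :=
  Filter.Tendsto (fun h : ℝ => h⁻¹ * (f (a + h • (Pi.single i 1 : Fin n → ℝ)) - f a))
    (𝓝[≠] (0 : ℝ)) (𝓝 L)

/-!
At any vector `v`, the conjunction is the center of mass of the entries of `v` for weights that
depend continuously on `v` as long as the minimum of `v` is nonzero. Its difference from `p` is the
center of mass of the increments `v j - p`, that is, the value at `v - p` of a linear map depending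
continuously on `v`. By Carathéodory's criterion, this linear map at the constant vector `p` is the
derivative there. All weights at `p` are equal, so the derivative is the average of the coordinates.
-/

section Calculus

variable {𝕜 E F ι : Type*} [NontriviallyNormedField 𝕜]
  [NormedAddCommGroup E] [NormedSpace 𝕜 E] [NormedAddCommGroup F] [NormedSpace 𝕜 F]

theorem hasFDerivAt_of_eventuallyEq_apply_sub {f : E → F} {A : E → E →L[𝕜] F} {a : E}
    (hA : ContinuousAt A a) (hf : ∀ᶠ x in 𝓝 a, f x - f a = A x (x - a)) :
    HasFDerivAt f (A a) a := by
  refine .of_isLittleO ?_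
  have hA_sub : (fun x => A x - A a) =o[𝓝 a] fun _ => (1 : ℝ) :=
    (Asymptotics.isLittleO_one_iff ℝ).2 (tendsto_sub_nhds_zero_iff.2 hA)
  have hlittle : (fun x => ‖A x - A a‖ * ‖x - a‖) =o[𝓝 a] fun x => x - a := by
    simpa using hA_sub.norm_left.mul_isBigO (Asymptotics.isBigO_refl (fun x => ‖x - a‖) _)
  refine Asymptotics.IsBigO.trans_isLittleO (.of_bound 1 ?_) hlittle
  filter_upwards [hf] with x hx
  simpa [hx] using (A x - A a).le_opNorm (x - a)

theorem continuousAt_centerMass_weights {t : Finset ι} {w : ι → 𝕜} (hw : ∑ j ∈ t, w j ≠ 0)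
    (z : ι → E) : ContinuousAt (fun c : ι → 𝕜 => t.centerMass c z) w := by
  have hsum : Continuous fun c : ι → 𝕜 => ∑ j ∈ t, c j := by fun_prop
  have hsmul : Continuous fun c : ι → 𝕜 => ∑ j ∈ t, c j • z j := by fun_prop
  exact (hsum.continuousAt.inv₀ hw).smul hsmul.continuousAt

theorem centerMass_proj_apply (t : Finset ι) (w : ι → 𝕜) (v : ι → E) :
    t.centerMass w (fun j => (.proj j : (ι → E) →L[𝕜] E)) v = t.centerMass w v := by
  simp [Finset.centerMass]

theorem hasFDerivAt_centerMass_const [Finite ι] {t : Finset ι} {w : (ι → E) → ι → 𝕜} {p : E}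
    (hw : ContinuousAt w fun _ => p) (hsum : ∑ j ∈ t, w (fun _ => p) j ≠ 0) :
    HasFDerivAt (fun v => t.centerMass (w v) v)
      (t.centerMass (w fun _ => p) fun j => (.proj j : (ι → E) →L[𝕜] E)) fun _ => p := by
  have := Fintype.ofFinite ι
  have hA : ContinuousAt
      (fun v => t.centerMass (w v) fun j => (.proj j : (ι → E) →L[𝕜] E)) fun _ => p :=
    (continuousAt_centerMass_weights hsum _).comp_of_eq hw rfl
  refine hasFDerivAt_of_eventuallyEq_apply_sub hA ?_
  have hsum_cont : ContinuousAt (fun v => ∑ j ∈ t, w v j) fun _ => p :=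
    tendsto_finsetSum t fun j _ => continuousAt_pi.1 hw j
  filter_upwards [hsum_cont.eventually_ne hsum] with v hv
  have hconst : ∀ u, ∑ j ∈ t, w u j ≠ 0 → t.centerMass (w u) (fun _ => p) = p :=
    fun u hu => t.centerMass_const hu p
  rw [map_sub, centerMass_proj_apply, centerMass_proj_apply, hconst _ hsum, hconst _ hv]

theorem HasPartialDeriv.of_hasFDerivAt {n : ℕ} {f : (Fin n → ℝ) → ℝ} {f' : (Fin n → ℝ) →L[ℝ] ℝ}
    {a : Fin n → ℝ} (hf : HasFDerivAt f f' a) (i : Fin n) :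
    HasPartialDeriv f a i (f' (Pi.single i 1)) :=
  (hf.hasLineDerivAt (Pi.single i 1)).tendsto_slope_zero

end Calculus

section Conjunction

variable {n : ℕ}

theorem listMin_ofFn [NeZero n] (v : Fin n → ℝ) :
    listMin (List.ofFn v) = Finset.univ.inf' Finset.univ_nonempty v := by
  have hmin : (List.ofFn v).min? = some (Finset.univ.inf' Finset.univ_nonempty v) := by
    obtain ⟨j, -, hj⟩ := Finset.exists_mem_eq_inf' Finset.univ_nonempty v
    exact List.min?_eq_some_iff.2 ⟨(List.mem_ofFn' _ _).2 ⟨j, hj.symm⟩,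
      List.forall_mem_ofFn_iff.2 fun k => Finset.inf'_le v (Finset.mem_univ k)⟩
  rw [listMin, hmin, Option.getD_some]

theorem listMin_ofFn_const [NeZero n] (p : ℝ) : listMin (List.ofFn fun _ : Fin n => p) = p := by
  rw [listMin_ofFn, Finset.inf'_const]

theorem continuous_listMin_ofFn [NeZero n] :
    Continuous fun v : Fin n → ℝ => listMin (List.ofFn v) := by
  simp only [listMin_ofFn]
  fun_prop

/-- The weight `exp (-ν x̃)` that the conjunction `stl_and_gt0` gives to each entry of `v`, where
`x̃` is the relative deviation of the entry from the minimum of `v`. -/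
noncomputable def stlWeight (ν : ℝ) (v : Fin n → ℝ) (j : Fin n) : ℝ :=
  exp (-(ν * ((v j - listMin (List.ofFn v)) / listMin (List.ofFn v))))

theorem stl_and_gt0_ofFn (ν : ℝ) (v : Fin n → ℝ) :
    stl_and_gt0 ν (List.ofFn v) = Finset.univ.centerMass (stlWeight ν v) v := by
  simp only [stl_and_gt0, Finset.centerMass, stlWeight, List.map_ofFn, List.sum_ofFn,
    Function.comp_apply, smul_eq_mul, mul_comm, div_eq_mul_inv]

theorem stlWeight_const [NeZero n] (ν p : ℝ) :
    stlWeight ν (fun _ : Fin n => p) = fun _ => 1 := by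
  funext j
  simp only [stlWeight, listMin_ofFn_const, sub_self, zero_div, mul_zero, neg_zero, exp_zero]

theorem continuousAt_stlWeight [NeZero n] (ν : ℝ) {v : Fin n → ℝ}
    (hv : listMin (List.ofFn v) ≠ 0) : ContinuousAt (stlWeight ν) v := by
  have hmin := (continuous_listMin_ofFn (n := n)).continuousAt (x := v)
  have hdev (j : Fin n) : ContinuousAt
      (fun u : Fin n → ℝ => (u j - listMin (List.ofFn u)) / listMin (List.ofFn u)) v :=
    ((continuousAt_apply j v).sub hmin).div hmin hv
  exact continuousAt_pi.2 fun j => ((hdev j).const_mul ν).neg.rexp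

end Conjunction

theorem shadowlifting_stl_and_gt0_general {n : ℕ} [NeZero n] (ν : ℝ) {p : ℝ} (hp : p ≠ 0) :
    HasFDerivAt (stl_and_gt0 ν ∘ fun v : Fin n → ℝ => List.ofFn v)
      ((n : ℝ)⁻¹ • ∑ j, (.proj j : (Fin n → ℝ) →L[ℝ] ℝ)) fun _ => p := by
  have hcont : ContinuousAt (stlWeight ν) fun _ : Fin n => p :=
    continuousAt_stlWeight ν (by rwa [listMin_ofFn_const])
  have hsum : ∑ j, stlWeight ν (fun _ : Fin n => p) j ≠ 0 := by
    simp [stlWeight_const, NeZero.ne n]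
  have hderiv := hasFDerivAt_centerMass_const hcont hsum
  simpa only [Function.comp_def, stl_and_gt0_ofFn, stlWeight_const, Finset.centerMass,
    Finset.sum_const, Finset.card_univ, Fintype.card_fin, nsmul_one, one_smul] using hderiv

theorem shadowlifting_stl_and_gt0 (ν : ℝ) (hν : 0 < ν) (M : ℕ)
    (p : ℝ) (hp : 0 < p) (i : Fin (M + 1)) :
    HasPartialDeriv (stl_and_gt0 ν ∘ fun v : Fin (M + 1) → ℝ => List.ofFn v)
      (fun _ => p) i (1 / (M + 1)) := by
  simpa using HasPartialDeriv.of_hasFDerivAt (shadowlifting_stl_and_gt0_general ν hp.ne') i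
end
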